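/- (Fastest candidate trajectory.) Let 𝒜, ℬ, B be n×n matrices over the extended reals ℝ̄, let H = (ℬ^♯ ⊗ 𝒜) ⊕ B, let x(0) ∈ ℝ̄^n, and define x(m) = 𝒜^m ⊗ x(0) for m ≥ 0. Then the following are equivalent: (a) x(m) ≤ ℬ ⊗' x(m-1) for all m ≥ 1 and x(m) = B* ⊗ x(m) for all m ≥ 0; (b) H* ⊗ x(m) = x(m) for all m ≥ 0 (i.e. every x(m) lies in the image of H*). -/

import Mathlib

/-!
Max-plus addition on the extended reals is residuated: `a + b ≤ c ↔ b ≤ mnAdd (-a) c`, with no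
finiteness assumptions (`add_le_iff_le_mnAdd`). Three consequences give the theorem.

* Addition distributes over arbitrary suprema, so the max-plus product is associative and
  `x(m+1) = 𝒜 ⊗ x(m)`.
* `x ≤ mnMulVec ℬ y ↔ ℬ^♯ ⊗ x ≤ y` (`le_mnMulVec_iff`), so the first half of (a) says
  `(ℬ^♯ ⊗ 𝒜) ⊗ x(m) ≤ x(m)` for all `m`.
* `A* ⊗ x = x ↔ A ⊗ x ≤ x` (`mpStar_mulVec_eq_iff`), so the second half of (a) says
  `B ⊗ x(m) ≤ x(m)`, and (b) says `H ⊗ x(m) ≤ x(m)`.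

Since `H = (ℬ^♯ ⊗ 𝒜) ⊕ B`, the last inequality is the conjunction of the other two.
-/

noncomputable section

/-- Max-plus matrix product over the extended reals (`-∞` is absorbing for `+` in `EReal`). -/
def mpMul {m n p : ℕ} (A : Matrix (Fin m) (Fin n) EReal) (B : Matrix (Fin n) (Fin p) EReal) :
    Matrix (Fin m) (Fin p) EReal :=
  fun i j => ⨆ k, A i k + B k j

/-- Max-plus matrix-vector product. -/
def mpMulVec {m n : ℕ} (A : Matrix (Fin m) (Fin n) EReal) (x : Fin n → EReal) :
    Fin m → EReal :=
  fun i => ⨆ k, A i k + x k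

/-- Min-plus addition on `EReal`: `+∞` is absorbing. -/
def mnAdd (a b : EReal) : EReal := -((-a) + (-b))

/-- Min-plus matrix product. -/
def mnMul {m n p : ℕ} (A : Matrix (Fin m) (Fin n) EReal) (B : Matrix (Fin n) (Fin p) EReal) :
    Matrix (Fin m) (Fin p) EReal :=
  fun i j => ⨅ k, mnAdd (A i k) (B k j)

/-- Min-plus matrix-vector product. -/
def mnMulVec {m n : ℕ} (A : Matrix (Fin m) (Fin n) EReal) (x : Fin n → EReal) :
    Fin m → EReal :=
  fun i => ⨅ k, mnAdd (A i k) (x k)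

/-- Conjugate matrix: `(conj A) i j = -(A j i)`. -/
def conjM {m n : ℕ} (A : Matrix (Fin m) (Fin n) EReal) : Matrix (Fin n) (Fin m) EReal :=
  fun i j => -(A j i)

/-- Max-plus identity matrix. -/
def mpId (n : ℕ) : Matrix (Fin n) (Fin n) EReal :=
  fun i j => if i = j then 0 else ⊥

/-- Min-plus identity matrix. -/
def mnId (n : ℕ) : Matrix (Fin n) (Fin n) EReal :=
  fun i j => if i = j then 0 else ⊤

/-- Max-plus matrix powers. -/
def mpPow {n : ℕ} (A : Matrix (Fin n) (Fin n) EReal) : ℕ → Matrix (Fin n) (Fin n) EReal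
  | 0 => mpId n
  | k + 1 => mpMul A (mpPow A k)

/-- Min-plus matrix powers. -/
def mnPow {n : ℕ} (A : Matrix (Fin n) (Fin n) EReal) : ℕ → Matrix (Fin n) (Fin n) EReal
  | 0 => mnId n
  | k + 1 => mnMul A (mnPow A k)

/-- Max-plus Kleene star: entrywise supremum of all max-plus powers. -/
def mpStar {n : ℕ} (A : Matrix (Fin n) (Fin n) EReal) : Matrix (Fin n) (Fin n) EReal :=
  fun i j => ⨆ k, mpPow A k i j

/-- Min-plus star: entrywise infimum of all min-plus powers. -/
def mnStar {n : ℕ} (A : Matrix (Fin n) (Fin n) EReal) : Matrix (Fin n) (Fin n) EReal :=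
  fun i j => ⨅ k, mnPow A k i j

/-- Entrywise maximum of two matrices (`A ⊕ B`). -/
def mSup {m n : ℕ} (A B : Matrix (Fin m) (Fin n) EReal) : Matrix (Fin m) (Fin n) EReal :=
  fun i j => A i j ⊔ B i j

/-- Residuation of max-plus addition by min-plus addition; the two absorbing conventions at
infinity are exactly what makes it hold for all extended reals. -/
lemma add_le_iff_le_mnAdd (a b c : EReal) : a + b ≤ c ↔ b ≤ mnAdd (-a) c := by
  unfold mnAdd
  rw [neg_neg, EReal.le_neg]
  induction a <;> induction b <;> induction c <;> try simp
  norm_cast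
  constructor <;> intro h <;> linarith

lemma add_iSup_le_iff {ι : Sort*} (a c : EReal) (f : ι → EReal) :
    a + ⨆ k, f k ≤ c ↔ ∀ k, a + f k ≤ c := by
  simp only [add_le_iff_le_mnAdd, iSup_le_iff]

lemma iSup_add_le_iff {ι : Sort*} (a c : EReal) (f : ι → EReal) :
    (⨆ k, f k) + a ≤ c ↔ ∀ k, f k + a ≤ c := by
  simp only [add_comm _ a, add_iSup_le_iff]

lemma mpMulVec_le_iff {m n : ℕ} (A : Matrix (Fin m) (Fin n) EReal) (x : Fin n → EReal)
    (y : Fin m → EReal) : mpMulVec A x ≤ y ↔ ∀ i k, A i k + x k ≤ y i := by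
  simp only [Pi.le_def, mpMulVec, iSup_le_iff]

lemma mpMulVec_mono {m n : ℕ} (A : Matrix (Fin m) (Fin n) EReal) {x y : Fin n → EReal}
    (h : x ≤ y) : mpMulVec A x ≤ mpMulVec A y :=
  fun _ => iSup_mono fun k => add_le_add_right (h k) _

lemma mpMulVec_mpMul {m n p : ℕ} (A : Matrix (Fin m) (Fin n) EReal)
    (B : Matrix (Fin n) (Fin p) EReal) (x : Fin p → EReal) :
    mpMulVec (mpMul A B) x = mpMulVec A (mpMulVec B x) := by
  refine eq_of_forall_ge_iff fun c => ?_
  simp only [mpMulVec_le_iff, mpMul, mpMulVec, iSup_add_le_iff, add_iSup_le_iff, add_assoc]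
  exact forall_congr' fun i => forall_comm

lemma mpMulVec_mpId {n : ℕ} (x : Fin n → EReal) : mpMulVec (mpId n) x = x := by
  refine eq_of_forall_ge_iff fun c => ?_
  rw [mpMulVec_le_iff, Pi.le_def]
  simp only [mpId]
  refine forall_congr' fun i => ⟨fun h => by simpa using h i, fun h k => ?_⟩
  by_cases hk : i = k
  · subst hk
    simpa using h
  · simp [hk]

lemma mpMulVec_mpStar_le_iff {n : ℕ} (A : Matrix (Fin n) (Fin n) EReal) (x y : Fin n → EReal) :
    mpMulVec (mpStar A) x ≤ y ↔ ∀ k, mpMulVec (mpPow A k) x ≤ y := by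
  simp only [mpMulVec_le_iff, mpStar, iSup_add_le_iff]
  exact ⟨fun h k i j => h i j k, fun h i j k => h k i j⟩

/-- The fixed points of `A*` are the subsolutions of `A`. -/
lemma mpStar_mulVec_eq_iff {n : ℕ} (A : Matrix (Fin n) (Fin n) EReal) (x : Fin n → EReal) :
    mpMulVec (mpStar A) x = x ↔ mpMulVec A x ≤ x := by
  have hpow := (mpMulVec_mpStar_le_iff A x (mpMulVec (mpStar A) x)).1 le_rfl
  constructor
  · intro h
    have h1 := hpow 1
    rwa [h, mpPow, mpPow, mpMulVec_mpMul, mpMulVec_mpId] at h1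
  · intro h
    refine le_antisymm ((mpMulVec_mpStar_le_iff A x x).2 fun k => ?_) ?_
    · induction k with
      | zero => exact (mpMulVec_mpId x).le
      | succ k ih =>
        rw [mpPow, mpMulVec_mpMul]
        exact (mpMulVec_mono A ih).trans h
    · have h0 := hpow 0
      rwa [mpPow, mpMulVec_mpId] at h0

/-- Galois connection: min-plus multiplication by `A` is right adjoint to max-plus multiplication
by `A^♯`. -/
lemma le_mnMulVec_iff {m n : ℕ} (A : Matrix (Fin m) (Fin n) EReal) (x : Fin m → EReal)
    (y : Fin n → EReal) : x ≤ mnMulVec A y ↔ mpMulVec (conjM A) x ≤ y := by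
  rw [mpMulVec_le_iff]
  simp only [conjM, add_le_iff_le_mnAdd, neg_neg, Pi.le_def, mnMulVec, le_iInf_iff]
  exact forall_comm

lemma mpMulVec_mSup_le_iff {m n : ℕ} (A B : Matrix (Fin m) (Fin n) EReal) (x : Fin n → EReal)
    (y : Fin m → EReal) :
    mpMulVec (mSup A B) x ≤ y ↔ mpMulVec A x ≤ y ∧ mpMulVec B x ≤ y := by
  have key (a b c d : EReal) : (a ⊔ b) + c ≤ d ↔ a + c ≤ d ∧ b + c ≤ d := by
    simp only [add_comm _ c, add_le_iff_le_mnAdd, sup_le_iff]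
  simp only [mpMulVec_le_iff, mSup, key, forall_and]

/-- fastest candidate trajectory. -/
theorem fastest_candidate {n : ℕ} (𝒜 ℬ B : Matrix (Fin n) (Fin n) EReal)
    (x0 : Fin n → EReal) :
    ((∀ m : ℕ, 1 ≤ m →
        mpMulVec (mpPow 𝒜 m) x0 ≤ mnMulVec ℬ (mpMulVec (mpPow 𝒜 (m - 1)) x0)) ∧
      (∀ m : ℕ, mpMulVec (mpPow 𝒜 m) x0 = mpMulVec (mpStar B) (mpMulVec (mpPow 𝒜 m) x0))) ↔
      (∀ m : ℕ,
        mpMulVec (mpStar (mSup (mpMul (conjM ℬ) 𝒜) B)) (mpMulVec (mpPow 𝒜 m) x0) =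
          mpMulVec (mpPow 𝒜 m) x0) := by
  have step (m : ℕ) : mpMulVec (mpPow 𝒜 (m + 1)) x0 = mpMulVec 𝒜 (mpMulVec (mpPow 𝒜 m) x0) := by
    rw [mpPow, mpMulVec_mpMul]
  simp only [mpStar_mulVec_eq_iff, mpMulVec_mSup_le_iff, forall_and, le_mnMulVec_iff,
    eq_comm (b := mpMulVec (mpStar B) _), mpMulVec_mpMul]
  refine and_congr_left fun _ => ⟨fun h m => ?_, fun h m hm => ?_⟩
  · simpa [step] using h (m + 1) (Nat.le_add_left 1 m)
  · obtain ⟨m, rfl⟩ := Nat.exists_eq_add_of_le' hm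
    simpa [step] using h m
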